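/- There is an absolute constant C > 0 such that for every n×n matrix X = (x_1, …, x_n) with each column s-sparse, if r denotes the number of columns j with |x_j|₁ = max_k |x_k|₁, then the conic Gaussian width satisfies w²(D(‖·‖₁, X)) ≤ 1 + n² − r(n − s·log(Cn⁴r²)). In particular, if r = n (X is l₁-column-flat) then w²(D(‖·‖₁, X)) ≤ 1 + n·s·log(Cn⁶). -/

import Mathlib

/-!
The proof is weak duality for the descent cone, entry by entry.

Let `R` be the set of columns whose `l₁`-norm equals `‖X‖₁`. If `V` lies in the descent cone and
`j ∈ R`, then the `l₁`-subgradient inequality at `x_j` gives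
`∑_{X i j ≠ 0} sign (X i j) * V i j + ∑_{X i j = 0} |V i j| ≤ 0` (`column_constraint`).
Subtracting `τ ≥ 0` times this quantity for each `j ∈ R` from `⟨G, V⟩` can only increase it, and
what is left is a sum of one-entry terms. By `2 y v ≤ y² / a + a v²`, each of them is at most
`(φ(G i j) / a + a (V i j)²) / 2`, where `φ` (`entryBound`) is

* `g²` for `j ∉ R`, with expectation `1`;
* `(g - τ sign (X i j))²` for `j ∈ R`, `X i j ≠ 0`, with expectation `1 + τ²`;
* an exponential majorant of `(|g| - τ)₊²` for `j ∈ R`, `X i j = 0`, with expectation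
  `4 τ⁻² exp (-τ² / 2)`.

With `τ² = 1 + 2 log n` the last expectation is at most `4 / n`, so that the expectations sum to
at most `n (n - r) + r (s (2 + 2 log n) + 4) ≤ n² - r (n - s log (e⁶ n⁴ r²))`. Calling `M` this
bound plus one, the choice `a = √M` yields `w ≤ √M`. Finally `w ≥ 0`, since
the supremum dominates `⟨G, U⟩` for any fixed `U`, and so `w² ≤ M`.
-/

open scoped BigOperators
open scoped Classical

noncomputable section

/-- The l1 norm of the j-th column of X. -/
def colNorm1 {n : ℕ} (X : Matrix (Fin n) (Fin n) ℝ) (j : Fin n) : ℝ := ∑ i, |X i j|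

/-- The matrix norm ‖X‖₁ := max_j |x_j|₁. -/
def mnorm1 {n : ℕ} (X : Matrix (Fin n) (Fin n) ℝ) : ℝ := ⨆ j, colNorm1 X j

/-- Trace inner product on matrices. -/
def minner {n : ℕ} (A B : Matrix (Fin n) (Fin n) ℝ) : ℝ := ∑ i, ∑ j, A i j * B i j

/-- Euclidean norm on ℝ^m. -/
def vnorm2 {m : ℕ} (y : Fin m → ℝ) : ℝ := Real.sqrt (∑ k, (y k)^2)

/-- Frobenius norm. -/
def frob {n : ℕ} (X : Matrix (Fin n) (Fin n) ℝ) : ℝ := Real.sqrt (∑ i, ∑ j, (X i j)^2)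

/-- H_S : the matrix agreeing with H on the sparsity pattern S and zero elsewhere. -/
def restrict {n : ℕ} (S : Fin n → Finset (Fin n)) (H : Matrix (Fin n) (Fin n) ℝ) :
    Matrix (Fin n) (Fin n) ℝ := Matrix.of fun i j => if i ∈ S j then H i j else 0

/-- An s-sparsity pattern: S_j ⊆ rows, |S_j| ≤ s for every column j. -/
def SparsityPattern (n s : ℕ) (S : Fin n → Finset (Fin n)) : Prop := ∀ j, (S j).card ≤ s

/-- Σ_s^{n×n}: every column has at most s nonzero entries. -/
def ColSparse {n : ℕ} (s : ℕ) (X : Matrix (Fin n) (Fin n) ℝ) : Prop :=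
  ∀ j, ((Finset.univ : Finset (Fin n)).filter fun i => X i j ≠ 0).card ≤ s

/-- l1-column-flat: all columns have the same l1-norm. -/
def Flat {n : ℕ} (X : Matrix (Fin n) (Fin n) ℝ) : Prop :=
  ∀ j k, colNorm1 X j = colNorm1 X k
open MeasureTheory ProbabilityTheory

/-- The law of an n×n random matrix with i.i.d. standard Gaussian N(0,1) entries. -/
def gaussPi (n : ℕ) : Measure (Fin n → Fin n → ℝ) :=
  Measure.pi fun _ => Measure.pi fun _ => gaussianReal 0 1

/-- The descent cone D(‖·‖₁, X). -/
def descCone {n : ℕ} (X : Matrix (Fin n) (Fin n) ℝ) : Set (Matrix (Fin n) (Fin n) ℝ) :=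
  {V | ∃ t : ℝ, 0 < t ∧ mnorm1 (X + t • V) ≤ mnorm1 X}

/-- The conic Gaussian width of a cone K of matrices, w.r.t. the Frobenius norm. -/
def gwidth {n : ℕ} (K : Set (Matrix (Fin n) (Fin n) ℝ)) : ℝ :=
  ∫ G, sSup {c : ℝ | ∃ U ∈ K, frob U = 1 ∧ c = minner (Matrix.of G) U} ∂(gaussPi n)

/-! ### One-dimensional Gaussian estimates -/

/-- The function of one Gaussian entry `g` that majorizes the square of its distance to the
(scaled) subdifferential. Here `p` says that the entry lies in a column of maximal `l₁`-norm, and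
`x` is the corresponding entry of `X`. -/
def entryBound (τ : ℝ) (p : Prop) (x g : ℝ) : ℝ :=
  if p then
    if x ≠ 0 then (g - τ * SignType.sign x) ^ 2
    else 2 / τ ^ 2 * Real.exp (-τ ^ 2) * (Real.exp (τ * g) + Real.exp (-τ * g))
  else g ^ 2

/-- The expectation of `entryBound τ p x` under the standard Gaussian law. -/
def entryMean (τ : ℝ) (p : Prop) (x : ℝ) : ℝ :=
  if p then
    if x ≠ 0 then 1 + τ ^ 2 else 4 / τ ^ 2 * Real.exp (-τ ^ 2 / 2)
  else 1

lemma gauss_sq_integrable : Integrable (fun g : ℝ => g ^ 2) (gaussianReal 0 1) := by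
  have h := (memLp_id_gaussianReal (μ := 0) (v := 1) 2).integrable_sq
  simpa using h

lemma gauss_id_integrable : Integrable (fun g : ℝ => g) (gaussianReal 0 1) := by
  have h := (memLp_id_gaussianReal (μ := 0) (v := 1) 1)
  exact memLp_one_iff_integrable.1 (by simpa [id_def] using! h)

lemma gauss_sq_integral : ∫ g, g ^ 2 ∂(gaussianReal 0 1) = 1 := by
  have h := variance_of_integral_eq_zero (μ := gaussianReal 0 1) (X := fun g : ℝ => g)
    (by fun_prop) (by simp)
  rw [variance_fun_id_gaussianReal] at h
  simpa using h.symm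

lemma gauss_exp_integral (t : ℝ) :
    ∫ g, Real.exp (t * g) ∂(gaussianReal 0 1) = Real.exp (t ^ 2 / 2) := by
  have h := congrFun (mgf_fun_id_gaussianReal (μ := 0) (v := 1)) t
  simpa [mgf] using h

lemma entryBound_integrable (τ : ℝ) (p : Prop) (x : ℝ) :
    Integrable (entryBound τ p x) (gaussianReal 0 1) := by
  unfold entryBound
  split_ifs
  · have : (fun g : ℝ => (g - τ * SignType.sign x) ^ 2) =
        fun g => g ^ 2 - (2 * (τ * SignType.sign x)) * g + (τ * SignType.sign x) ^ 2 := by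
      funext g; ring
    rw [this]
    exact (gauss_sq_integrable.sub (gauss_id_integrable.const_mul _)).add (integrable_const _)
  · exact ((integrable_exp_mul_gaussianReal τ).add
      (integrable_exp_mul_gaussianReal (-τ))).const_mul _
  · exact gauss_sq_integrable

lemma entryBound_integral (τ : ℝ) (p : Prop) (x : ℝ) :
    ∫ g, entryBound τ p x g ∂(gaussianReal 0 1) = entryMean τ p x := by
  unfold entryBound entryMean
  split_ifs with hp hx
  · have : (fun g : ℝ => (g - τ * SignType.sign x) ^ 2) =
        fun g => g ^ 2 - (2 * (τ * SignType.sign x)) * g + (τ * SignType.sign x) ^ 2 := by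
      funext g; ring
    have hsub : Integrable (fun g : ℝ => g ^ 2 - (2 * (τ * SignType.sign x)) * g)
        (gaussianReal 0 1) := gauss_sq_integrable.sub (gauss_id_integrable.const_mul _)
    rw [this, integral_add hsub (integrable_const _),
      integral_sub gauss_sq_integrable (gauss_id_integrable.const_mul _),
      integral_const_mul, gauss_sq_integral, integral_id_gaussianReal]
    have hs : ((SignType.sign x : SignType) : ℝ) ^ 2 = 1 := by
      rcases lt_or_gt_of_ne hx with h | h <;> simp [h]
    simp [mul_pow, hs]
  · rw [integral_const_mul, integral_add (integrable_exp_mul_gaussianReal τ)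
      (integrable_exp_mul_gaussianReal (-τ)), gauss_exp_integral, gauss_exp_integral]
    have : Real.exp (-τ ^ 2 / 2) = Real.exp (-τ ^ 2) * Real.exp (τ ^ 2 / 2) := by
      rw [← Real.exp_add]; congr 1; ring
    rw [this, neg_sq]; ring
  · exact gauss_sq_integral

lemma entryBound_nonneg (τ : ℝ) (p : Prop) (x g : ℝ) : 0 ≤ entryBound τ p x g := by
  unfold entryBound
  split_ifs <;> positivity

/-- The subgradient functional of `|·|` at `x`, maximized over the subdifferential: the
one-sided directional derivative of `|·|` at `x` in direction `v`. -/
def absDir (x v : ℝ) : ℝ := if x ≠ 0 then SignType.sign x * v else |v|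

lemma abs_add_ge_absDir (x v t : ℝ) (ht : 0 < t) : |x| + t * absDir x v ≤ |x + t * v| := by
  unfold absDir
  split_ifs with h
  · rcases lt_or_gt_of_ne h with h | h
    · simp only [h, sign_neg, abs_of_neg]
      have := neg_le_abs (x + t * v)
      simp only [SignType.coe_neg, SignType.coe_one]
      linarith
    · simp only [h, sign_pos, abs_of_pos]
      have := le_abs_self (x + t * v)
      simp only [SignType.coe_one]
      linarith
  · have h : x = 0 := by simpa using h
    simp [h, abs_mul, abs_of_pos ht]

lemma mul_le_young (a y v : ℝ) (ha : 0 < a) : y * v ≤ (y ^ 2 / a + a * v ^ 2) / 2 := by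
  have h : 0 ≤ (y - a * v) ^ 2 / a := by positivity
  have : (y - a * v) ^ 2 / a = y ^ 2 / a - 2 * (y * v) + a * v ^ 2 := by
    field_simp
    ring
  linarith

/-- The exponential majorant of `(|g| - τ)₊²`, from `z² / 2 ≤ exp z` at `z = τ (|g| - τ)`. -/
lemma tail_majorant (τ g : ℝ) (hτ : 0 < τ) (h : τ ≤ |g|) :
    (|g| - τ) ^ 2 ≤
      2 / τ ^ 2 * Real.exp (-τ ^ 2) * (Real.exp (τ * g) + Real.exp (-τ * g)) := by
  have h0 : 0 ≤ τ * (|g| - τ) := mul_nonneg hτ.le (by linarith)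
  have h1 := Real.quadratic_le_exp_of_nonneg h0
  have h2 : Real.exp (τ * |g|) ≤ Real.exp (τ * g) + Real.exp (-τ * g) := by
    rcases abs_cases g with ⟨e, _⟩ | ⟨e, _⟩
    · rw [e]; linarith [Real.exp_pos (-τ * g)]
    · rw [e, mul_neg, ← neg_mul]; linarith [Real.exp_pos (τ * g)]
  have h3 : Real.exp (τ * (|g| - τ)) = Real.exp (-τ ^ 2) * Real.exp (τ * |g|) := by
    rw [← Real.exp_add]; congr 1; ring
  calc (|g| - τ) ^ 2 = 2 / τ ^ 2 * ((τ * (|g| - τ)) ^ 2 / 2) := by field_simp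
    _ ≤ 2 / τ ^ 2 * Real.exp (τ * (|g| - τ)) := by gcongr; linarith
    _ = 2 / τ ^ 2 * Real.exp (-τ ^ 2) * Real.exp (τ * |g|) := by rw [h3]; ring
    _ ≤ _ := by gcongr

lemma entry_dual (τ a : ℝ) (hτ : 0 < τ) (ha : 0 < a) (p : Prop) (x g v : ℝ) :
    g * v - τ * (if p then absDir x v else 0) ≤ (entryBound τ p x g / a + a * v ^ 2) / 2 := by
  unfold entryBound absDir
  split_ifs with hp hx
  · have := mul_le_young a (g - τ * SignType.sign x) v ha
    linarith
  · have h1 : g * v ≤ |g| * |v| := by rw [← abs_mul]; exact le_abs_self _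
    by_cases h : τ ≤ |g|
    · have h2 := mul_le_young a (|g| - τ) |v| ha
      have h3 : (|g| - τ) ^ 2 / a ≤ (2 / τ ^ 2 * Real.exp (-τ ^ 2) *
          (Real.exp (τ * g) + Real.exp (-τ * g))) / a := by
        gcongr; exact tail_majorant τ g hτ h
      rw [sq_abs] at h2
      linarith
    · have h2 : |g| * |v| ≤ τ * |v| := by
        gcongr; linarith
      have h3 : 0 ≤ (2 / τ ^ 2 * Real.exp (-τ ^ 2) *
          (Real.exp (τ * g) + Real.exp (-τ * g)) / a + a * v ^ 2) / 2 := by positivity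
      linarith
  · have := mul_le_young a g v ha
    linarith

/-! ### The descent cone -/

lemma colNorm1_le_mnorm1 {n : ℕ} (X : Matrix (Fin n) (Fin n) ℝ) (j : Fin n) :
    colNorm1 X j ≤ mnorm1 X :=
  le_ciSup (f := fun j => colNorm1 X j) (Set.finite_range _).bddAbove j

lemma column_constraint {n : ℕ} (X V : Matrix (Fin n) (Fin n) ℝ) (hV : V ∈ descCone X)
    (j : Fin n) (hj : colNorm1 X j = mnorm1 X) : ∑ i, absDir (X i j) (V i j) ≤ 0 := by
  obtain ⟨t, ht, h⟩ := hV
  have h1 : colNorm1 (X + t • V) j ≤ colNorm1 X j := by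
    rw [hj]; exact (colNorm1_le_mnorm1 _ j).trans h
  have h2 : colNorm1 X j + t * ∑ i, absDir (X i j) (V i j) ≤ colNorm1 (X + t • V) j := by
    unfold colNorm1
    rw [Finset.mul_sum, ← Finset.sum_add_distrib]
    exact Finset.sum_le_sum fun i _ => abs_add_ge_absDir _ _ t ht
  by_contra hc
  have := mul_pos ht (not_le.1 hc)
  linarith

lemma minner_le {n : ℕ} (X : Matrix (Fin n) (Fin n) ℝ) (τ a : ℝ) (hτ : 0 < τ) (ha : 0 < a)
    (G V : Matrix (Fin n) (Fin n) ℝ) (hV : V ∈ descCone X) (hV1 : frob V = 1) :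
    minner G V ≤
      ((∑ i, ∑ j, entryBound τ (colNorm1 X j = mnorm1 X) (X i j) (G i j)) / a + a) / 2 := by
  have hc : ∑ i, ∑ j, (if colNorm1 X j = mnorm1 X then absDir (X i j) (V i j) else 0) ≤ 0 := by
    rw [Finset.sum_comm]
    refine Finset.sum_nonpos fun j _ => ?_
    by_cases h : colNorm1 X j = mnorm1 X
    · simpa [h] using column_constraint X V hV j h
    · simp [h]
  have hf : ∑ i, ∑ j, V i j ^ 2 = 1 := by
    unfold frob at hV1
    exact Real.sqrt_eq_one.1 hV1
  have hs := Finset.sum_le_sum fun i (_ : i ∈ Finset.univ) =>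
    Finset.sum_le_sum fun j (_ : j ∈ Finset.univ) =>
      entry_dual τ a hτ ha (colNorm1 X j = mnorm1 X) (X i j) (G i j) (V i j)
  simp only [Finset.sum_sub_distrib, ← Finset.sum_div, Finset.sum_add_distrib,
    ← Finset.mul_sum, hf] at hs
  have := mul_nonpos_of_nonneg_of_nonpos hτ.le hc
  unfold minner
  linarith

/-! ### Integration over the Gaussian matrix -/

instance gaussPi_prob (n : ℕ) : IsProbabilityMeasure (gaussPi n) := by
  unfold gaussPi; infer_instance

lemma gaussPi_integrable_entry {n : ℕ} (i j : Fin n) {f : ℝ → ℝ}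
    (hf : Integrable f (gaussianReal 0 1)) : Integrable (fun G => f (G i j)) (gaussPi n) := by
  have h := integrable_comp_eval (μ := fun _ : Fin n => gaussianReal 0 1) (i := j) hf
  exact integrable_comp_eval
    (μ := fun _ : Fin n => Measure.pi fun _ : Fin n => gaussianReal 0 1) (i := i) h

lemma gaussPi_integral_entry {n : ℕ} (i j : Fin n) {f : ℝ → ℝ}
    (hf : Integrable f (gaussianReal 0 1)) :
    ∫ G, f (G i j) ∂(gaussPi n) = ∫ g, f g ∂(gaussianReal 0 1) := by
  have h := integrable_comp_eval (μ := fun _ : Fin n => gaussianReal 0 1) (i := j) hf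
  have h1 := integral_comp_eval
    (μ := fun _ : Fin n => Measure.pi fun _ : Fin n => gaussianReal 0 1) (i := i)
    h.aestronglyMeasurable
  have h2 := integral_comp_eval (μ := fun _ : Fin n => gaussianReal 0 1) (i := j)
    hf.aestronglyMeasurable
  exact h1.trans h2

lemma minner_integrable {n : ℕ} (U : Matrix (Fin n) (Fin n) ℝ) :
    Integrable (fun G => minner (Matrix.of G) U) (gaussPi n) := by
  unfold minner
  exact integrable_finsetSum _ fun i _ => integrable_finsetSum _ fun j _ =>
    (gaussPi_integrable_entry i j gauss_id_integrable).mul_const _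

lemma minner_integral {n : ℕ} (U : Matrix (Fin n) (Fin n) ℝ) :
    ∫ G, minner (Matrix.of G) U ∂(gaussPi n) = 0 := by
  have hi := fun i j : Fin n =>
    (gaussPi_integrable_entry i j gauss_id_integrable).mul_const (U i j)
  unfold minner
  simp only [Matrix.of_apply]
  rw [integral_finsetSum _ fun i _ => integrable_finsetSum _ fun j _ => hi i j]
  refine Finset.sum_eq_zero fun i _ => ?_
  rw [integral_finsetSum _ fun j _ => hi i j]
  refine Finset.sum_eq_zero fun j _ => ?_
  rw [integral_mul_const, gaussPi_integral_entry i j gauss_id_integrable,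
    integral_id_gaussianReal, zero_mul]

/-- If the supremum were not integrable, its Bochner integral would be `0` and the bound would
still hold, so no measurability of the supremum is needed. -/
lemma gwidth_sq_le {n : ℕ} (X : Matrix (Fin n) (Fin n) ℝ) (τ M : ℝ) (hτ : 0 < τ) (hM : 0 < M)
    (h : ∑ i, ∑ j, entryMean τ (colNorm1 X j = mnorm1 X) (X i j) ≤ M) :
    gwidth (descCone X) ^ 2 ≤ M := by
  have ha : 0 < √M := Real.sqrt_pos.2 hM
  by_cases hF : Integrable (fun G : Fin n → Fin n → ℝ =>
      sSup {c : ℝ | ∃ U ∈ descCone X, frob U = 1 ∧ c = minner (Matrix.of G) U}) (gaussPi n)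
  swap
  · unfold gwidth
    rw [integral_undef hF]
    simpa using hM.le
  set B : (Fin n → Fin n → ℝ) → ℝ := fun G =>
    ∑ i, ∑ j, entryBound τ (colNorm1 X j = mnorm1 X) (X i j) (G i j) with hB
  have hBnn : ∀ G, 0 ≤ B G := fun G =>
    Finset.sum_nonneg fun i _ => Finset.sum_nonneg fun j _ => entryBound_nonneg _ _ _ _
  have hi := fun i j : Fin n => gaussPi_integrable_entry i j
    (entryBound_integrable τ (colNorm1 X j = mnorm1 X) (X i j))
  have hBint : Integrable B (gaussPi n) :=
    integrable_finsetSum _ fun i _ => integrable_finsetSum _ fun j _ => hi i j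
  have hBM : ∫ G, B G ∂(gaussPi n) ≤ M := by
    refine le_trans (le_of_eq ?_) h
    rw [hB, integral_finsetSum _ fun i _ => integrable_finsetSum _ fun j _ => hi i j]
    refine Finset.sum_congr rfl fun i _ => ?_
    rw [integral_finsetSum _ fun j _ => hi i j]
    refine Finset.sum_congr rfl fun j _ => ?_
    rw [gaussPi_integral_entry i j (entryBound_integrable _ _ _), entryBound_integral]
  have hle : ∀ G : Fin n → Fin n → ℝ,
      ∀ c ∈ {c : ℝ | ∃ U ∈ descCone X, frob U = 1 ∧ c = minner (Matrix.of G) U},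
        c ≤ (B G / √M + √M) / 2 := by
    rintro G c ⟨U, hU, hU1, rfl⟩
    exact minner_le X τ (√M) hτ ha (Matrix.of G) U hU hU1
  have hup : gwidth (descCone X) ≤ √M := by
    have h1 : gwidth (descCone X) ≤ ∫ G, (B G / √M + √M) / 2 ∂(gaussPi n) := by
      refine integral_mono hF (((hBint.div_const _).add (integrable_const _)).div_const _)
        fun G => Real.sSup_le (hle G) ?_
      have := hBnn G
      positivity
    rw [integral_div, integral_add (hBint.div_const _) (integrable_const _), integral_div] at h1
    have h2 : (∫ G, B G ∂(gaussPi n)) / √M ≤ √M := by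
      rw [div_le_iff₀ ha, Real.mul_self_sqrt hM.le]; exact hBM
    simp only [integral_const, probReal_univ, one_smul] at h1
    linarith
  have hlow : 0 ≤ gwidth (descCone X) := by
    by_cases hne : ∃ U ∈ descCone X, frob U = 1
    · obtain ⟨U, hU, hU1⟩ := hne
      rw [← minner_integral U]
      exact integral_mono (minner_integrable U) hF fun G =>
        le_csSup ⟨_, hle G⟩ ⟨U, hU, hU1, rfl⟩
    · have he : ∀ G : Fin n → Fin n → ℝ,
          {c : ℝ | ∃ U ∈ descCone X, frob U = 1 ∧ c = minner (Matrix.of G) U} = ∅ := by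
        intro G
        ext c
        simp only [Set.mem_ofPred_eq, Set.mem_empty_iff_false, iff_false]
        rintro ⟨U, hU, hU1, -⟩
        exact hne ⟨U, hU, hU1⟩
      simp [gwidth, he]
  calc gwidth (descCone X) ^ 2 ≤ √M ^ 2 := by gcongr
    _ = M := Real.sq_sqrt hM.le

/-! ### Summing the expectations -/

lemma entryMean_sum_le {n s : ℕ} (hn : 0 < n) (hs : 0 < s) (X : Matrix (Fin n) (Fin n) ℝ)
    (hX : ColSparse s X) :
    ∑ i, ∑ j, entryMean (√(1 + 2 * Real.log n)) (colNorm1 X j = mnorm1 X) (X i j) ≤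
      ∑ j, if colNorm1 X j = mnorm1 X then (s : ℝ) * (6 + 2 * Real.log n) else n := by
  have hn1 : (1 : ℝ) ≤ n := by exact_mod_cast hn
  have hs1 : (1 : ℝ) ≤ s := by exact_mod_cast hs
  have hlog : 0 ≤ Real.log n := Real.log_nonneg hn1
  have hτ : √(1 + 2 * Real.log n) ^ 2 = 1 + 2 * Real.log n := Real.sq_sqrt (by linarith)
  rw [Finset.sum_comm]
  refine Finset.sum_le_sum fun j _ => ?_
  by_cases hj : colNorm1 X j = mnorm1 X
  · simp only [entryMean, hj, if_true, hτ]
    have hexp : Real.exp (-(1 + 2 * Real.log n) / 2) ≤ (n : ℝ)⁻¹ := by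
      rw [← Real.exp_log (show (0 : ℝ) < (n : ℝ)⁻¹ by positivity), Real.log_inv]
      exact Real.exp_le_exp.2 (by linarith)
    have htail : 4 / (1 + 2 * Real.log n) * Real.exp (-(1 + 2 * Real.log n) / 2)
        ≤ 4 * (n : ℝ)⁻¹ := by
      gcongr
      exact div_le_self (by norm_num) (by linarith)
    calc ∑ i, (if X i j ≠ 0 then 1 + (1 + 2 * Real.log n)
          else 4 / (1 + 2 * Real.log n) * Real.exp (-(1 + 2 * Real.log n) / 2))
        ≤ ∑ i, ((if X i j ≠ 0 then 2 + 2 * Real.log n else 0) + 4 * (n : ℝ)⁻¹) := by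
          refine Finset.sum_le_sum fun i _ => ?_
          have : (0 : ℝ) ≤ 4 * (n : ℝ)⁻¹ := by positivity
          split_ifs <;> linarith
      _ = ((Finset.univ.filter fun i => X i j ≠ 0).card : ℝ) * (2 + 2 * Real.log n) + 4 := by
          rw [Finset.sum_add_distrib, ← Finset.sum_filter]
          simp only [Finset.sum_const, nsmul_eq_mul, Finset.card_univ, Fintype.card_fin]
          field_simp
      _ ≤ s * (2 + 2 * Real.log n) + 4 := by
          gcongr
          exact hX j
      _ ≤ s * (6 + 2 * Real.log n) := by nlinarith
  · simp [entryMean, hj]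

/-- bound on the squared conic Gaussian width of the descent cone of
‖·‖₁ at a column-wise s-sparse matrix (Lemma 5.1). -/
theorem gaussian_width_bound :
    ∃ C : ℝ, 0 < C ∧ ∀ n s : ℕ, 0 < n → 0 < s →
      ∀ X : Matrix (Fin n) (Fin n) ℝ, ColSparse s X →
        ∀ r : ℕ,
          r = ((Finset.univ : Finset (Fin n)).filter fun j => colNorm1 X j = mnorm1 X).card →
          (gwidth (descCone X))^2
              ≤ 1 + (n : ℝ)^2 - r * (n - s * Real.log (C * n^4 * r^2))
            ∧ (r = n →
              (gwidth (descCone X))^2 ≤ 1 + (n : ℝ) * s * Real.log (C * n^6)) := by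
  have key : ∀ n s : ℕ, 0 < n → 0 < s →
      ∀ X : Matrix (Fin n) (Fin n) ℝ, ColSparse s X →
        ∀ r : ℕ,
          r = ((Finset.univ : Finset (Fin n)).filter fun j => colNorm1 X j = mnorm1 X).card →
          (gwidth (descCone X))^2
              ≤ 1 + (n : ℝ)^2 - r * (n - s * Real.log (Real.exp 6 * n^4 * r^2)) := by
    intro n s hn hs X hX r hr
    have hn1 : (1 : ℝ) ≤ n := by exact_mod_cast hn
    have hlog : 0 ≤ Real.log n := Real.log_nonneg hn1
    have hsum : ∑ j, (if colNorm1 X j = mnorm1 X then (s : ℝ) * (6 + 2 * Real.log n) else n) =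
        n ^ 2 - r * (n - s * (6 + 2 * Real.log n)) := by
      have : ∀ j, (if colNorm1 X j = mnorm1 X then (s : ℝ) * (6 + 2 * Real.log n) else n) =
          n + if colNorm1 X j = mnorm1 X then (s : ℝ) * (6 + 2 * Real.log n) - n else 0 := by
        intro j; split_ifs <;> ring
      rw [Finset.sum_congr rfl fun j _ => this j, Finset.sum_add_distrib, ← Finset.sum_filter]
      simp only [Finset.sum_const, nsmul_eq_mul, Finset.card_univ, Fintype.card_fin, ← hr]
      ring
    have hnn : 0 ≤ ∑ j, (if colNorm1 X j = mnorm1 X then (s : ℝ) * (6 + 2 * Real.log n) else n) :=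
      Finset.sum_nonneg fun j _ => by split_ifs <;> positivity
    have hw := gwidth_sq_le X (√(1 + 2 * Real.log n))
      (1 + ∑ j, if colNorm1 X j = mnorm1 X then (s : ℝ) * (6 + 2 * Real.log n) else n)
      (Real.sqrt_pos.2 (by linarith)) (by linarith)
      ((entryMean_sum_le hn hs X hX).trans (by linarith))
    rw [hsum] at hw
    rcases Nat.eq_zero_or_pos r with h0 | hr0
    · simpa [h0] using hw
    have hr1 : (1 : ℝ) ≤ r := by exact_mod_cast hr0
    have hL : 6 + 2 * Real.log n ≤ Real.log (Real.exp 6 * n^4 * r^2) := by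
      rw [Real.log_mul (by positivity) (by positivity), Real.log_mul (by positivity)
        (by positivity), Real.log_exp, Real.log_pow, Real.log_pow]
      have := Real.log_nonneg hr1
      push_cast
      linarith
    have : (r : ℝ) * (s * (6 + 2 * Real.log n)) ≤
        r * (s * Real.log (Real.exp 6 * n^4 * r^2)) := by gcongr
    linarith
  refine ⟨Real.exp 6, Real.exp_pos 6, fun n s hn hs X hX r hr => ?_⟩
  have h := key n s hn hs X hX r hr
  refine ⟨h, fun hrn => ?_⟩
  have e : Real.exp 6 * (n : ℝ)^4 * (n : ℝ)^2 = Real.exp 6 * n^6 := by ring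
  rw [hrn, e] at h
  linarith

end
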